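/- The projection p : ℝ³ \ {0} → S² × ℝ/ℤ, p(x) = (x/‖x‖, log₂‖x‖ mod 1), is a covering map. -/

import Mathlib

/-- Punctured three-dimensional Euclidean space `ℝ³ \ {0}`. -/
def PuncturedR3 : Type := {y : EuclideanSpace ℝ (Fin 3) // y ≠ 0}

noncomputable instance : TopologicalSpace PuncturedR3 := instTopologicalSpaceSubtype

/-- The contraction `a(x) = x/2` on `ℝ³ \ {0}`. -/
noncomputable def contractionA (x : PuncturedR3) : PuncturedR3 :=
  ⟨(2 : ℝ)⁻¹ • x.1, smul_ne_zero (by norm_num) x.2⟩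

/-- The projection `p : ℝ³ \ {0} → S² × ℝ/ℤ`,
`p(x) = (x/‖x‖, log₂ ‖x‖ mod 1)`. -/
noncomputable def projP (x : PuncturedR3) :
    Metric.sphere (0 : EuclideanSpace ℝ (Fin 3)) 1 × AddCircle (1 : ℝ) :=
  (⟨‖x.1‖⁻¹ • x.1, by
      have h : ‖x.1‖ ≠ 0 := norm_ne_zero_iff.mpr x.2
      simp [mem_sphere_zero_iff_norm, norm_smul, inv_mul_cancel₀ h]⟩,
    (Real.logb 2 ‖x.1‖ : ℝ))

/-- The product of an identity map with a covering map is a covering map. -/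
theorem isCoveringMap_id_prodMap {Y E X : Type*} [TopologicalSpace Y] [TopologicalSpace E]
    [TopologicalSpace X] {f : E → X} (hf : IsCoveringMap f) :
    IsCoveringMap (fun e : Y × E => (e.1, f e.2)) := by
  rintro ⟨y, x⟩
  have hc := hf.continuous
  obtain ⟨hd, U, hxU, hU, hfU, H, hH⟩ := hf x
  have hH' : ∀ z, (H.symm z : E) ∈ f ⁻¹' U := fun z => (H.symm z).2
  have hH2 : ∀ z, f (H.symm z) = z.1.1 := fun z => by rw [← hH]; simp
  refine IsEvenlyCovered.to_isEvenlyCovered_preimage (I := f ⁻¹' {x})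
    ⟨hd, Prod.snd ⁻¹' U, hxU, hU.preimage continuous_snd, hfU.preimage continuous_snd,
    { toFun := fun e => (⟨(e.1.1, f e.1.2), e.2⟩, (H ⟨e.1.2, e.2⟩).2)
      invFun := fun z => ⟨(z.1.1.1, H.symm (⟨z.1.1.2, z.1.2⟩, z.2)), hH' _⟩
      left_inv := ?_
      right_inv := ?_
      continuous_toFun := ?_
      continuous_invFun := ?_ }, fun _ => rfl⟩
  · rintro ⟨⟨a, e⟩, he⟩
    have h1 : ((⟨f e, he⟩ : U), (H ⟨e, he⟩).2) = H ⟨e, he⟩ :=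
      Prod.ext (Subtype.ext (hH ⟨e, he⟩).symm) rfl
    apply Subtype.ext
    refine Prod.ext rfl ?_
    change ((H.symm ((⟨f e, he⟩ : U), (H ⟨e, he⟩).2) : f ⁻¹' U) : E) = e
    rw [h1, H.symm_apply_apply]
  · rintro ⟨⟨⟨a, u⟩, hu⟩, i⟩
    refine Prod.ext (Subtype.ext (Prod.ext rfl (hH2 _))) ?_
    change (H (H.symm ((⟨u, hu⟩ : U), i))).2 = i
    rw [H.apply_symm_apply]
  · fun_prop
  · fun_prop

/-- Polar coordinates with logarithmic radius. -/
noncomputable def polarHomeo :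
    PuncturedR3 ≃ₜ Metric.sphere (0 : EuclideanSpace ℝ (Fin 3)) 1 × ℝ where
  toFun x := ((projP x).1, Real.logb 2 ‖x.1‖)
  invFun z := ⟨(2 : ℝ) ^ z.2 • z.1.1, smul_ne_zero (by positivity) (by
    have := mem_sphere_zero_iff_norm.mp z.1.2
    intro h
    rw [h] at this
    simp at this)⟩
  left_inv x := by
    apply Subtype.ext
    have h : 0 < ‖x.1‖ := norm_pos_iff.mpr x.2
    change (2 : ℝ) ^ (Real.logb 2 ‖x.1‖) • (‖x.1‖⁻¹ • x.1) = x.1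
    rw [Real.rpow_logb (by norm_num) (by norm_num) h, smul_inv_smul₀ h.ne']
  right_inv z := by
    have h1 := mem_sphere_zero_iff_norm.mp z.1.2
    have h2 : (0 : ℝ) < 2 ^ z.2 := by positivity
    have h3 : ‖(2 : ℝ) ^ z.2 • z.1.1‖ = 2 ^ z.2 := by
      rw [norm_smul, h1, mul_one, Real.norm_of_nonneg h2.le]
    refine Prod.ext (Subtype.ext ?_) ?_
    · change ‖(2 : ℝ) ^ z.2 • z.1.1‖⁻¹ • ((2 : ℝ) ^ z.2 • z.1.1) = z.1.1
      rw [h3, inv_smul_smul₀ h2.ne']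
    · change Real.logb 2 ‖(2 : ℝ) ^ z.2 • z.1.1‖ = z.2
      rw [h3, Real.logb_rpow (by norm_num) (by norm_num)]
  continuous_toFun := by
    have hv : Continuous (fun x : PuncturedR3 => x.1) := continuous_subtype_val
    have hn : ∀ x : PuncturedR3, ‖x.1‖ ≠ 0 := fun x => norm_ne_zero_iff.mpr x.2
    refine Continuous.prodMk (Continuous.subtype_mk ((hv.norm.inv₀ hn).smul hv) _) ?_
    exact (hv.norm.log hn).div_const _
  continuous_invFun := by
    have h1 : Continuous
        (fun z : Metric.sphere (0 : EuclideanSpace ℝ (Fin 3)) 1 × ℝ => (2 : ℝ) ^ z.2) :=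
      continuous_const.rpow continuous_snd (fun _ => Or.inl (by norm_num))
    have h2 : Continuous
        (fun z : Metric.sphere (0 : EuclideanSpace ℝ (Fin 3)) 1 × ℝ => z.1.1) :=
      continuous_subtype_val.comp continuous_fst
    exact Continuous.subtype_mk (h1.smul h2) _

/-- The projection `p : ℝ³ \ {0} → S² × ℝ/ℤ` is a covering map. -/
theorem projP_isCoveringMap : IsCoveringMap projP :=
  (isCoveringMap_id_prodMap (AddCircle.isCoveringMap_coe (1 : ℝ))).comp_homeomorph polarHomeo
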